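/- Let A ∈ ℂ^{n×n} be Hermitian J-symmetric, let v ∈ ℂ^n be arbitrary, and set w := J v*. Then for every integer k ≥ 0, w^H A^k v = 0. Consequently the Krylov subspace K_k(A, v) = span{v, Av, …, A^{k-1} v} is orthogonal to K_k(A, J v*) = span{J v*, A J v*, …, A^{k-1} J v*} for every k. -/

import Mathlib

/-!
Since `J` is real, `wᴴ Aᵏ v = (J v)ᵀ Aᵏ v = vᵀ (Jᵀ Aᵏ) v`. The symmetry relation `J A = Aᵀ J` together
with `Jᵀ = -J` makes `J Aᵏ` skew-symmetric, and the bilinear form of a skew-symmetric complex matrix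
vanishes on the diagonal. As `A` is Hermitian, `(Aⁱ w)ᴴ (Aʲ v) = wᴴ Aⁱ⁺ʲ v = 0`, so the spanning
vectors of the two Krylov spaces are orthogonal, and sesquilinearity gives the orthogonality of
the spaces.
-/

open Matrix

theorem dotProduct_mulVec_self_of_skew {n : ℕ} {M : Matrix (Fin n) (Fin n) ℂ}
    (hM : Mᵀ = -M) (v : Fin n → ℂ) : v ⬝ᵥ M.mulVec v = 0 := by
  have h : v ⬝ᵥ M.mulVec v = -(v ⬝ᵥ M.mulVec v) := by
    conv_lhs => rw [dotProduct_mulVec, ← mulVec_transpose, hM, neg_mulVec, neg_dotProduct,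
      dotProduct_comm]
  exact self_eq_neg.mp h

theorem mul_eq_transpose_mul {n : ℕ} {J A : Matrix (Fin n) (Fin n) ℂ}
    (hJorth : Jᵀ = J⁻¹) (hJsym : J * A * J⁻¹ = Aᵀ) : J * A = Aᵀ * J := by
  by_cases hu : IsUnit J.det
  · rw [← hJsym, Matrix.mul_assoc (J * A), nonsing_inv_mul _ hu, Matrix.mul_one]
  · -- With the convention `J⁻¹ = 0` for singular `J`, orthogonality forces `J = 0`.
    rw [nonsing_inv_apply_not_isUnit _ hu, transpose_eq_zero] at hJorth
    simp [hJorth]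

theorem transpose_mul_pow_of_skew {n : ℕ} {J A : Matrix (Fin n) (Fin n) ℂ}
    (hJskew : Jᵀ = -J) (hJA : J * A = Aᵀ * J) (k : ℕ) : (J * A ^ k)ᵀ = -(J * A ^ k) := by
  have h : SemiconjBy J (A ^ k) (Aᵀ ^ k) := SemiconjBy.pow_right hJA k
  rw [transpose_mul, transpose_pow, hJskew, Matrix.mul_neg, h.eq]

/-- For Hermitian `J`-symmetric `A` and `w = J v*`, one has `wᴴ Aᵏ v = 0` for every `k ≥ 0`;
consequently the Krylov subspaces `K_k(A, v)` and `K_k(A, J v*)` are orthogonal for every `k`. -/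
theorem stmt_7 {n : ℕ} (hn : 0 < n) (J A : Matrix (Fin n) (Fin n) ℂ)
    (hJreal : J.map (starRingEnd ℂ) = J)
    (hJskew : Jᵀ = -J) (hJorth : Jᵀ = J⁻¹)
    (hAH : Aᴴ = A) (hJsym : J * A * J⁻¹ = Aᵀ)
    (v : Fin n → ℂ) :
    (∀ k : ℕ, star (J.mulVec (star v)) ⬝ᵥ (A ^ k).mulVec v = 0) ∧
    (∀ k : ℕ, ∀ x ∈ Submodule.span ℂ
        (Set.range fun i : Fin k => (A ^ (i : ℕ)).mulVec v),
      ∀ y ∈ Submodule.span ℂ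
        (Set.range fun i : Fin k => (A ^ (i : ℕ)).mulVec (J.mulVec (star v))),
      star y ⬝ᵥ x = 0) := by
  have hw : star (J.mulVec (star v)) = J.mulVec v := by
    have hJ : Jᴴ = Jᵀ := by
      conv_rhs => rw [← hJreal]
      rfl
    rw [star_mulVec, star_star, hJ, vecMul_transpose]
  have key : ∀ k : ℕ, star (J.mulVec (star v)) ⬝ᵥ (A ^ k).mulVec v = 0 := fun k => by
    rw [hw, ← vecMul_transpose, ← dotProduct_mulVec, mulVec_mulVec, hJskew, Matrix.neg_mul,
      neg_mulVec, dotProduct_neg, dotProduct_mulVec_self_of_skew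
        (transpose_mul_pow_of_skew hJskew (mul_eq_transpose_mul hJorth hJsym) k), neg_zero]
  refine ⟨key, fun k x hx y hy => ?_⟩
  induction hy using Submodule.span_induction with
  | zero => simp
  | add y z _ _ hy hz => rw [star_add, add_dotProduct, hy, hz, add_zero]
  | smul c y _ hy => rw [star_smul, smul_dotProduct, hy, smul_zero]
  | mem y hy =>
    obtain ⟨i, rfl⟩ := hy
    induction hx using Submodule.span_induction with
    | zero => simp
    | add x z _ _ hx hz => rw [dotProduct_add, hx, hz, add_zero]
    | smul c x _ hx => rw [dotProduct_smul, hx, smul_zero]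
    | mem x hx =>
      obtain ⟨j, rfl⟩ := hx
      dsimp only
      rw [star_mulVec, conjTranspose_pow, hAH, ← dotProduct_mulVec, mulVec_mulVec, ← pow_add, key]
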